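/- Let r ≥ 3 and n ≥ r be integers. The complete balanced r-partite r-graph on n vertices (vertex set partitioned into r parts of sizes as equal as possible, edges being all r-sets meeting every part in exactly one vertex) is T_r-free and has minimum positive codegree δ⁺_{r-1} equal to ⌊n/r⌋. In particular, co⁺ex(n, T_r) ≥ ⌊n/r⌋. -/

import Mathlib

variable {V : Type*} [Fintype V] [DecidableEq V]

/-- The (r-1)-shadow of an r-graph: all (r-1)-sets contained in some edge. -/
def sshadow (r : ℕ) (H : Finset (Finset V)) : Finset (Finset V) :=
  Finset.univ.filter (fun e => e.card = r - 1 ∧ ∃ E ∈ H, e ⊆ E)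

/-- The codegree neighborhood of a set `e`: vertices `v` with `e ∪ {v} ∈ H`. -/
def nbhd (H : Finset (Finset V)) (e : Finset V) : Finset V :=
  Finset.univ.filter (fun v => insert v e ∈ H)

/-- The neighborhood of a vertex. -/
def vnbhd (H : Finset (Finset V)) (v : V) : Finset V :=
  Finset.univ.filter (fun u => u ≠ v ∧ ∃ E ∈ H, u ∈ E ∧ v ∈ E)

/-- `H` is T_r-free. -/
def IsTrFree (r : ℕ) (H : Finset (Finset V)) : Prop :=
  ¬ ∃ (S W : Finset V) (a b : V),
      S.card = r - 1 ∧ W.card = r - 2 ∧ a ≠ b ∧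
      a ∉ S ∧ b ∉ S ∧ a ∉ W ∧ b ∉ W ∧ Disjoint S W ∧
      insert a S ∈ H ∧ insert b S ∈ H ∧ insert a (insert b W) ∈ H

/-- A set of vertices is independent. -/
def IsIndep (H : Finset (Finset V)) (I : Finset V) : Prop :=
  ∀ E ∈ H, (E ∩ I).card ≤ 1

/-- `H` is r-partite. -/
def IsRPartite (r : ℕ) (H : Finset (Finset V)) : Prop :=
  ∃ P : Fin r → Finset V, (∀ v : V, ∃! i, v ∈ P i) ∧ ∀ i, IsIndep H (P i)

/-- Minimum positive codegree. -/
noncomputable def minPosCodeg (r : ℕ) (H : Finset (Finset V)) : ℕ :=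
  sInf {k | ∃ e ∈ sshadow r H, (nbhd H e).card = k}

/-- The complete balanced r-partite r-graph on vertex set `Fin n`, with parts given by
residues modulo `r` (so part sizes are as equal as possible): edges are all sets meeting
each part in exactly one vertex. -/
def balancedRPartite (r n : ℕ) : Finset (Finset (Fin n)) :=
  Finset.univ.filter (fun E =>
    ∀ i, i < r → (E.filter (fun v : Fin n => (v : ℕ) % r = i)).card = 1)

/-!
An edge of the complete partite hypergraph of a colouring `f : α → ι` is a transversal of the
colour classes, so exchanging a vertex `x` of an edge for `v` gives an edge iff `f v = f x`. If
`insert a S` and `insert b S` are both edges, then `a` and `b` have the same colour, so no edge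
contains both: there is no generalized triangle. The codegrees of the shadow sets `E \ {x}` are the
sizes of the colour classes, and the smallest of them in an equitable colouring is the integer
part of the average.
-/

open Finset
open scoped FinsetFamily

section Fibers

variable {α ι : Type*}

lemma bijOn_univ_iff_forall_card_filter_eq_one [DecidableEq ι] {f : α → ι} {s : Finset α} :
    Set.BijOn f s Set.univ ↔ ∀ i, #{v ∈ s | f v = i} = 1 := by
  simp only [card_eq_one, singleton_iff_unique_mem, mem_filter]
  constructor
  · intro h i
    obtain ⟨v, hv, rfl⟩ := h.surjOn (Set.mem_univ i)
    exact ⟨v, ⟨hv, rfl⟩, fun w hw ↦ h.injOn hw.1 hv hw.2⟩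
  · intro h
    refine ⟨Set.mapsTo_univ f s, fun v hv w hw hvw ↦ ?_, fun i _ ↦ ?_⟩
    · exact (h (f w)).unique ⟨hv, hvw⟩ ⟨hw, rfl⟩
    · obtain ⟨v, hv, -⟩ := h i
      exact ⟨v, hv⟩

lemma iInf_eq_sum_div_card_of_equitableOn [Fintype ι] [Nonempty ι] {g : ι → ℕ}
    (hg : Set.EquitableOn Set.univ g) : ⨅ i, g i = (∑ i, g i) / Fintype.card ι := by
  rw [← coe_univ] at hg
  refine le_antisymm ?_ (le_ciInf fun i ↦ EquitableOn.le hg (mem_univ i))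
  rw [Nat.le_div_iff_mul_le Fintype.card_pos, mul_comm, ← smul_eq_mul, ← card_univ]
  exact card_nsmul_le_sum _ _ _ fun i _ ↦ ciInf_le (OrderBot.bddBelow _) i

lemma sum_card_filter_eq_card [Fintype α] [Fintype ι] [DecidableEq ι] (f : α → ι) :
    ∑ i, #{v | f v = i} = Fintype.card α :=
  (card_eq_sum_card_fiberwise fun v _ ↦ mem_univ (f v)).symm

lemma surjective_of_equitableOn_card_filter [Fintype α] [Fintype ι] [DecidableEq ι] {f : α → ι}
    (hf : Set.EquitableOn Set.univ fun i ↦ #{v | f v = i})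
    (hcard : Fintype.card ι ≤ Fintype.card α) : Function.Surjective f := by
  intro i
  have hpos : 0 < Fintype.card α / Fintype.card ι :=
    Nat.div_pos hcard (Fintype.card_pos_iff.mpr ⟨i⟩)
  have hle : Fintype.card α / Fintype.card ι ≤ #{v | f v = i} := by
    rw [← coe_univ] at hf
    simpa only [sum_card_filter_eq_card, card_univ] using EquitableOn.le hf (mem_univ i)
  obtain ⟨v, hv⟩ := card_pos.mp (hpos.trans_le hle)
  exact ⟨v, (mem_filter.mp hv).2⟩

lemma card_filter_ofNat_eq (r n : ℕ) [NeZero r] (i : Fin r) :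
    #{v : Fin n | Fin.ofNat r v = i} = n / r + if (i : ℕ) < n % r then 1 else 0 := by
  have hi : (i : ℕ) % r = i := Nat.mod_eq_of_lt i.isLt
  have hcount := Nat.count_modEq_card n (NeZero.pos r) i
  rw [Nat.count_eq_card_filter_range, hi, ← Nat.Iio_eq_range, ← Fin.map_valEmbedding_univ,
    filter_map, card_map] at hcount
  simpa [Fin.ext_iff, Nat.ModEq, hi, Function.comp_def] using hcount

lemma equitableOn_card_filter_ofNat (r n : ℕ) [NeZero r] :
    Set.EquitableOn Set.univ fun i : Fin r ↦ #{v : Fin n | Fin.ofNat r v = i} := by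
  intro i j _ _
  simp only [card_filter_ofNat_eq]
  split_ifs <;> omega

end Fibers

lemma sshadow_eq_shadow {α : Type*} [Fintype α] [DecidableEq α] {r : ℕ} (hr : r ≠ 0)
    {H : Finset (Finset α)} (hH : (H : Set (Finset α)).Sized r) : sshadow r H = ∂ H := by
  ext e
  simp only [sshadow, mem_filter, mem_univ, true_and, mem_shadow_iff_exists_mem_card_add_one]
  constructor
  · rintro ⟨he, E, hE, heE⟩
    exact ⟨E, hE, heE, by rw [hH hE]; omega⟩
  · rintro ⟨E, hE, heE, hcard⟩
    exact ⟨by rw [hH hE] at hcard; omega, E, hE, heE⟩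

section CompletePartite

variable {α ι : Type*} [Fintype α] {f : α → ι} {E : Finset α}

open Classical in
/-- The complete partite hypergraph whose parts are the colour classes of `f : α → ι`: its edges
are the transversals of these classes, encoded as the sets which `f` maps bijectively onto `ι`. -/
noncomputable def completePartite (f : α → ι) : Finset (Finset α) :=
  {E | Set.BijOn f E Set.univ}

lemma mem_completePartite : E ∈ completePartite f ↔ Set.BijOn f E Set.univ := by
  simp only [completePartite, mem_filter, mem_univ, true_and]

lemma balancedRPartite_eq_completePartite (r n : ℕ) [NeZero r] :
    balancedRPartite r n = completePartite fun v : Fin n ↦ Fin.ofNat r v := by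
  ext E
  simp [balancedRPartite, mem_completePartite, bijOn_univ_iff_forall_card_filter_eq_one,
    Fin.forall_iff, Fin.ext_iff]

lemma sized_completePartite [Fintype ι] (f : α → ι) :
    (completePartite f : Set (Finset α)).Sized (Fintype.card ι) := by
  intro E hE
  have hbij := mem_completePartite.mp hE
  rw [← coe_univ] at hbij
  exact hbij.finsetCard_eq

lemma completePartite_nonempty (hf : Function.Surjective f) : (completePartite f).Nonempty := by
  obtain ⟨s, -, hs⟩ := Set.surjOn_iff_exists_bijOn_subset.mp (Set.surjOn_univ.mpr hf)
  lift s to Finset α using s.toFinite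
  exact ⟨s, mem_completePartite.mpr hs⟩

variable [DecidableEq α]

lemma insert_erase_mem_completePartite_iff (hE : E ∈ completePartite f) {x v : α} (hx : x ∈ E) :
    insert v (E.erase x) ∈ completePartite f ↔ f v = f x := by
  rw [mem_completePartite] at hE ⊢
  constructor
  · intro h
    obtain ⟨c, hc, hcx⟩ := h.surjOn (Set.mem_univ (f x))
    rcases mem_insert.mp hc with rfl | hc
    · exact hcx
    · exact absurd (hE.injOn (mem_of_mem_erase hc) hx hcx) (ne_of_mem_erase hc)
  · intro hv
    have h := (hE.sdiff_singleton hx).insert (a := v) (by simp [hv])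
    simpa [hv] using h

lemma isTrFree_completePartite (r : ℕ) (f : α → ι) : IsTrFree r (completePartite f) := by
  rintro ⟨S, W, a, b, -, -, hab, haS, -, -, -, -, hSa, hSb, hWab⟩
  have hba : f b = f a := by
    rw [← insert_erase_mem_completePartite_iff hSa (mem_insert_self a S), erase_insert haS]
    exact hSb
  exact hab ((mem_completePartite.mp hWab).injOn (by simp) (by simp) hba.symm)

variable [DecidableEq ι]

lemma nbhd_completePartite_erase (hE : E ∈ completePartite f) {x : α} (hx : x ∈ E) :
    nbhd (completePartite f) (E.erase x) = ({v | f v = f x} : Finset α) := by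
  simp only [nbhd, insert_erase_mem_completePartite_iff hE hx]

lemma minPosCodeg_completePartite [Fintype ι] [Nonempty ι] (hf : Function.Surjective f) :
    minPosCodeg (Fintype.card ι) (completePartite f) = ⨅ i, #{v | f v = i} := by
  rw [minPosCodeg, sshadow_eq_shadow Fintype.card_ne_zero (sized_completePartite f), iInf]
  congr 1
  ext k
  constructor
  · rintro ⟨e, he, rfl⟩
    obtain ⟨E, hE, x, hx, rfl⟩ := mem_shadow_iff.mp he
    exact ⟨f x, by rw [nbhd_completePartite_erase hE hx]⟩
  · rintro ⟨i, rfl⟩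
    obtain ⟨E, hE⟩ := completePartite_nonempty hf
    obtain ⟨x, hx, rfl⟩ := (mem_completePartite.mp hE).surjOn (Set.mem_univ i)
    exact ⟨E.erase x, erase_mem_shadow hE hx, by rw [nbhd_completePartite_erase hE hx]⟩

end CompletePartite

theorem stmt16_general {α ι : Type*} [Fintype α] [DecidableEq α] [Fintype ι] [DecidableEq ι]
    [Nontrivial ι] (f : α → ι) (hf : Set.EquitableOn Set.univ fun i ↦ #{v | f v = i})
    (hcard : Fintype.card ι ≤ Fintype.card α) :
    (∀ E ∈ completePartite f, #E = Fintype.card ι) ∧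
    IsTrFree (Fintype.card ι) (completePartite f) ∧
    minPosCodeg (Fintype.card ι) (completePartite f) = Fintype.card α / Fintype.card ι ∧
    ∃ H : Finset (Finset α), (∀ E ∈ H, #E = Fintype.card ι) ∧ IsTrFree (Fintype.card ι) H ∧
      Fintype.card α / Fintype.card ι ≤ minPosCodeg (Fintype.card ι) H := by
  have hcodeg :
      minPosCodeg (Fintype.card ι) (completePartite f) = Fintype.card α / Fintype.card ι := by
    rw [minPosCodeg_completePartite (surjective_of_equitableOn_card_filter hf hcard),
      iInf_eq_sum_div_card_of_equitableOn hf, sum_card_filter_eq_card]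
  have hsized := sized_completePartite f
  have hfree := isTrFree_completePartite (Fintype.card ι) f
  exact ⟨hsized, hfree, hcodeg, completePartite f, hsized, hfree, hcodeg.ge⟩

/-- For `r ≥ 3` and `n ≥ r`, the complete balanced `r`-partite `r`-graph on `n` vertices is
an `r`-graph which is `T_r`-free and has minimum positive codegree exactly `⌊n/r⌋`. In
particular, the positive codegree Turán number of `T_r` is at least `⌊n/r⌋`. -/
theorem stmt16 {r n : ℕ} (hr : 3 ≤ r) (hn : r ≤ n) :
    (∀ E ∈ balancedRPartite r n, E.card = r) ∧
    IsTrFree r (balancedRPartite r n) ∧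
    minPosCodeg r (balancedRPartite r n) = n / r ∧
    ∃ H : Finset (Finset (Fin n)),
      (∀ E ∈ H, E.card = r) ∧ IsTrFree r H ∧ n / r ≤ minPosCodeg r H := by
  have : NeZero r := ⟨by omega⟩
  have : Nontrivial (Fin r) := Fin.nontrivial_iff_two_le.mpr (by omega)
  simpa [balancedRPartite_eq_completePartite] using
    stmt16_general _ (equitableOn_card_filter_ofNat r n) (by simpa using hn)
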